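/- Let P ⊂ ℝ^n be a full-dimensional lattice polytope such that the interior of the dilate n·P contains no point of ℤ^n (equivalently, cd(P) = n+1). Then P is unimodularly equivalent to the standard unimodular simplex Δ_n; that is, there exist U ∈ GL_n(ℤ) and w ∈ ℤ^n such that the affine map x ↦ Ux + w carries P onto Δ_n = conv(0, e_1, …, e_n). -/

import Mathlib

noncomputable section

open MeasureTheory Pointwise

/-- A point of `ℝ^n` is a lattice point if all its coordinates are integers. -/
def IsLatticePt {n : ℕ} (x : Fin n → ℝ) : Prop := ∀ i, ∃ z : ℤ, x i = (z : ℝ)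

/-- A lattice polytope is the convex hull of a finite set of lattice points. -/
def IsLatticePolytope {n : ℕ} (P : Set (Fin n → ℝ)) : Prop :=
  ∃ V : Finset (Fin n → ℝ), (∀ v ∈ V, IsLatticePt v) ∧
    P = convexHull ℝ (↑V : Set (Fin n → ℝ))

/-- A rational polytope is the convex hull of a finite set of rational points. -/
def IsRatPolytope {n : ℕ} (P : Set (Fin n → ℝ)) : Prop :=
  ∃ V : Finset (Fin n → ℝ), (∀ v ∈ V, ∀ i, ∃ q : ℚ, v i = (q : ℝ)) ∧
    P = convexHull ℝ (↑V : Set (Fin n → ℝ))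

/-- The vertices `0, e_1, …, e_t` of the standard unimodular simplex `Δ_t ⊆ ℝ^t`. -/
def stdSimplexVert (t : ℕ) (k : Fin (t + 1)) : Fin t → ℝ :=
  fun j => if (k : ℕ) = (j : ℕ) + 1 then 1 else 0

/-- The standard unimodular simplex `Δ_t = conv(0, e_1, …, e_t) ⊆ ℝ^t`. -/
def unimodSimplex (t : ℕ) : Set (Fin t → ℝ) := convexHull ℝ (Set.range (stdSimplexVert t))

/-- The interior of the dilate `s • P` contains a lattice point. -/
def HasInteriorLatticePt {n : ℕ} (P : Set (Fin n → ℝ)) (s : ℕ) : Prop :=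
  ∃ x ∈ interior ((s : ℝ) • P), IsLatticePt x

/-- The codegree `cd(P)`: the least positive integer `t` such that the interior of `t • P`
contains a lattice point. -/
def codeg {n : ℕ} (P : Set (Fin n → ℝ)) : ℕ :=
  sInf {t : ℕ | 0 < t ∧ HasInteriorLatticePt P t}

/-- Pairing of an integer vector with a real vector. -/
def iprod {n : ℕ} (a : Fin n → ℤ) (x : Fin n → ℝ) : ℝ := ∑ i, (a i : ℝ) * x i

/-- An integer vector is primitive if it is nonzero and its coordinates have no common
non-unit divisor. -/
def IsPrimitive {n : ℕ} (a : Fin n → ℤ) : Prop :=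
  a ≠ 0 ∧ ∀ d : ℤ, (∀ i, d ∣ a i) → IsUnit d

/-- `(a, b)` is a facet inequality of `P ⊆ ℝ^n`: `a` is a primitive integer inner normal,
`b = min_{x ∈ P} ⟨a, x⟩`, and the corresponding face has dimension `n - 1`. -/
def IsFacetIneq {n : ℕ} (P : Set (Fin n → ℝ)) (a : Fin n → ℤ) (b : ℝ) : Prop :=
  IsPrimitive a ∧ (∀ x ∈ P, b ≤ iprod a x) ∧
  {x ∈ P | iprod a x = b}.Nonempty ∧
  Module.finrank ℝ ↥(vectorSpan ℝ {x ∈ P | iprod a x = b}) = n - 1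

/-- The adjoint polytope `P^(s) = {x : ⟨a_F, x⟩ ≥ b_F + s for all facets F}`. -/
def adjointPoly {n : ℕ} (P : Set (Fin n → ℝ)) (s : ℝ) : Set (Fin n → ℝ) :=
  {x | ∀ a b, IsFacetIneq P a b → b + s ≤ iprod a x}

/-- The set `{s > 0 : P^(s) ≠ ∅}`; the ℚ-codegree is `μ(P) = (sSup (muSet P))⁻¹`. -/
def muSet {n : ℕ} (P : Set (Fin n → ℝ)) : Set ℝ :=
  {s : ℝ | 0 < s ∧ (adjointPoly P s).Nonempty}

/-- `F` is a (nonempty, exposed) face of the polytope `P`; with `u = 0` this includes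
`P` itself. -/
def IsFace {n : ℕ} (P F : Set (Fin n → ℝ)) : Prop :=
  F.Nonempty ∧ ∃ (u : (Fin n → ℝ) →ₗ[ℝ] ℝ) (c : ℝ),
    (∀ x ∈ P, c ≤ u x) ∧ F = {x ∈ P | u x = c}

/-- The dimension of a face (or polytope): the rank of its direction vector space. -/
def fdim {n : ℕ} (F : Set (Fin n → ℝ)) : ℕ := Module.finrank ℝ ↥(vectorSpan ℝ F)

/-- `vol` is the relative lattice volume of `F`: the Lebesgue volume of the image of `F`
under an affine isomorphism of `aff F` with `ℝ^{dim F}` carrying `(aff F) ∩ ℤ^n` onto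
`ℤ^{dim F}`. -/
def HasRelVol {n : ℕ} (F : Set (Fin n → ℝ)) (vol : ℝ) : Prop :=
  ∃ T : (Fin n → ℝ) →ᵃ[ℝ] (Fin (fdim F) → ℝ),
    Set.BijOn T (affineSpan ℝ F : Set (Fin n → ℝ)) Set.univ ∧
    T '' ((affineSpan ℝ F : Set (Fin n → ℝ)) ∩ {x | IsLatticePt x}) = {y | IsLatticePt y} ∧
    vol = (volume (T '' F)).toReal

/-- The alternating face sum `Σ_F (-1)^{n - dim F} (dim F + 1)! Vol(F)`. -/
def faceSum {n : ℕ} (𝓕 : Finset (Set (Fin n → ℝ))) (volf : Set (Fin n → ℝ) → ℝ) : ℝ :=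
  ∑ F ∈ 𝓕, (-1 : ℝ) ^ (n - fdim F) * (Nat.factorial (fdim F + 1) : ℝ) * volf F

/-- The alternating sum over all nonempty faces of `P` of
`(-1)^{n - dim F} (dim F + 1)! Vol(F)` vanishes. -/
def FaceSumZero {n : ℕ} (P : Set (Fin n → ℝ)) : Prop :=
  ∃ (𝓕 : Finset (Set (Fin n → ℝ))) (volf : Set (Fin n → ℝ) → ℝ),
    (∀ F, F ∈ 𝓕 ↔ IsFace P F) ∧ (∀ F ∈ 𝓕, HasRelVol F (volf F)) ∧
    faceSum 𝓕 volf = 0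

/-- A polytope `R ⊆ ℝ^n` (of dimension `d = fdim R`) is smooth: at each vertex there are
exactly `d` edges, whose primitive integer direction vectors form a ℤ-basis of the
lattice `(vectorSpan R) ∩ ℤ^n`. -/
def IsSmoothPoly {n : ℕ} (R : Set (Fin n → ℝ)) : Prop :=
  ∀ v ∈ Set.extremePoints ℝ R,
    ∃ (w : Fin (fdim R) → (Fin n → ℤ)) (c : Fin (fdim R) → ℝ),
      (∀ i, 0 < c i) ∧ (∀ i, IsPrimitive (w i)) ∧
      LinearIndependent ℝ (fun i => ((fun j => ((w i j : ℝ))) : Fin n → ℝ)) ∧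
      (∀ i, ((fun j => ((w i j : ℝ))) : Fin n → ℝ) ∈ vectorSpan ℝ R) ∧
      (∀ z : Fin n → ℤ, ((fun j => (z j : ℝ)) : Fin n → ℝ) ∈ vectorSpan ℝ R →
        ∃ m : Fin (fdim R) → ℤ,
          ((fun j => (z j : ℝ)) : Fin n → ℝ) =
            ∑ i, (m i : ℝ) • ((fun j => ((w i j : ℝ))) : Fin n → ℝ)) ∧
      (∀ F : Set (Fin n → ℝ), (IsFace R F ∧ v ∈ F ∧ fdim F = 1) ↔
        ∃ i, F = segment ℝ v (v + c i • ((fun j => ((w i j : ℝ))) : Fin n → ℝ)))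

/-- The real-linear map `ℝ^n → ℝ^t` induced by an integer matrix. -/
def matMap {t n : ℕ} (A : Matrix (Fin t) (Fin n) ℤ) : (Fin n → ℝ) → (Fin t → ℝ) :=
  fun x k => ∑ j, (A k j : ℝ) * x j

/-- The piece `R_k = P ∩ π_ℝ^{-1}(v_k)` of a Cayley sum over the `k`-th vertex of `Δ_t`. -/
def cayleyPiece {t n : ℕ} (A : Matrix (Fin t) (Fin n) ℤ) (P : Set (Fin n → ℝ))
    (k : Fin (t + 1)) : Set (Fin n → ℝ) :=
  {x ∈ P | matMap A x = stdSimplexVert t k}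

/-- Two polytopes are normally equivalent (have the same normal fan): for all linear
functionals `u, v`, the minimizing face of `u` equals that of `v` on `R` precisely when the
same holds on `S`. -/
def NormEquiv {n : ℕ} (R S : Set (Fin n → ℝ)) : Prop :=
  ∀ u v : (Fin n → ℝ) →ₗ[ℝ] ℝ,
    ({x ∈ R | ∀ y ∈ R, u x ≤ u y} = {x ∈ R | ∀ y ∈ R, v x ≤ v y}) ↔
    ({x ∈ S | ∀ y ∈ S, u x ≤ u y} = {x ∈ S | ∀ y ∈ S, v x ≤ v y})

/-- `Q` is the Cayley sum, via the surjective lattice projection `A : ℤ^n → ℤ^t`, of the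
normally equivalent polytopes `R_k = Q ∩ π_ℝ^{-1}(v_k)`: `π_ℝ` maps `Q` onto `Δ_t`. -/
def IsCayleyWith {n t : ℕ} (Q : Set (Fin n → ℝ)) (A : Matrix (Fin t) (Fin n) ℤ) : Prop :=
  (∀ y : Fin t → ℤ, ∃ x : Fin n → ℤ, A.mulVec x = y) ∧
  matMap A '' Q = unimodSimplex t ∧
  ∀ k l : Fin (t + 1), NormEquiv (cayleyPiece A Q k) (cayleyPiece A Q l)

/-- The unimodular affine map `x ↦ Ux + w`. -/
def unimodMap {n : ℕ} (U : Matrix (Fin n) (Fin n) ℤ) (w : Fin n → ℤ) :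
    (Fin n → ℝ) → (Fin n → ℝ) :=
  fun x i => (∑ j, (U i j : ℝ) * x j) + (w i : ℝ)

/-- The set `{s > 0 : P^(s) has the same normal fan as P}`; the nef value is
`τ(P) = (sSup (tauSet P))⁻¹`. -/
def tauSet {n : ℕ} (P : Set (Fin n → ℝ)) : Set ℝ :=
  {s : ℝ | 0 < s ∧ NormEquiv (adjointPoly P s) P}

/- Choose an affine basis `b` of `ℝ^n` among the lattice points of `P`. Every combination of the
`b i` with positive weights of total `n` is interior to `n • P`, hence is not a lattice point.

If a lattice point had a non-integral barycentric coordinate, shifting its coordinates by integers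
into `(0, 1]` would make their sum an integer smaller than `n + 1`, and increasing one of them would
give positive weights of total `n` of a lattice point. So barycentric coordinates with respect to
`b` identify `ℤ^n` with itself. If a point `u ∈ P` had a negative `j`-th coordinate, the lattice
point `∑ i ≠ j, b i` would be a combination of `u` and the `b i` with positive weights of total `n`.
So `P` is the simplex spanned by `b`. -/

section AffineBasis

lemma exists_affineBasis_forall_mem {k V Q : Type*} [DivisionRing k] [AddCommGroup V] [Module k V]
    [FiniteDimensional k V] [AddTorsor V Q] {n : ℕ} (hn : Module.finrank k V = n) {s : Set Q}
    (hs : affineSpan k s = ⊤) : ∃ b : AffineBasis (Fin (n + 1)) k Q, ∀ i, b i ∈ s := by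
  obtain ⟨t, hts, b, hb⟩ := AffineBasis.exists_affine_subbasis hs
  have : Fintype t := b.finite_set.fintype
  have hcard : Fintype.card t = n + 1 := by rw [b.card_eq_finrank_add_one, hn]
  refine ⟨b.reindex (Fintype.equivFinOfCardEq hcard), fun i ↦ ?_⟩
  rw [AffineBasis.reindex_apply, hb]
  exact hts (Subtype.coe_prop _)

lemma coord_sum_smul {ι k V : Type*} [Fintype ι] [Ring k] [AddCommGroup V] [Module k V]
    (b : AffineBasis ι k V) {w : ι → k} (hw : ∑ i, w i = 1) (i : ι) :
    b.coord i (∑ j, w j • b j) = w i := by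
  rw [← Finset.affineCombination_eq_linear_combination _ _ _ hw,
    b.coord_apply_combination_of_mem (Finset.mem_univ i) hw]

end AffineBasis

section PositiveWeights

open scoped Topology

variable {ι K : Type*} [LinearOrder K]

lemma sum_add_one_sub_ceil_lt_card [Fintype ι] [CommRing K] [IsStrictOrderedRing K] [FloorRing K]
    {c : ι → K} {i : ι} (hi : c i ∉ Set.range ((↑) : ℤ → K)) :
    ∑ j, (c j + (1 - ⌈c j⌉)) < Fintype.card ι := by
  have hle (j : ι) : c j + (1 - ⌈c j⌉) ≤ 1 := by linarith [Int.le_ceil (c j)]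
  have hlt : c i + (1 - ⌈c i⌉) < 1 := by
    have hne : c i ≠ ⌈c i⌉ := fun h ↦ hi ⟨_, h.symm⟩
    linarith [(Int.le_ceil (c i)).lt_of_ne hne]
  calc
    ∑ j, (c j + (1 - ⌈c j⌉)) < ∑ _j : ι, 1 :=
      Finset.sum_lt_sum (fun j _ ↦ hle j) ⟨i, Finset.mem_univ i, hlt⟩
    _ = Fintype.card ι := by simp

lemma exists_int_add_pos_sum_eq [Fintype ι] [CommRing K] [IsStrictOrderedRing K] [FloorRing K]
    {c : ι → K} {s N : ℤ} (hs : ∑ j, c j = s) (hN : Fintype.card ι ≤ N + 1)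
    {i : ι} (hi : c i ∉ Set.range ((↑) : ℤ → K)) :
    ∃ d : ι → ℤ, (∀ j, 0 < c j + d j) ∧ ∑ j, (c j + d j) = N := by
  classical
  set S : ℤ := s + ∑ j, (1 - ⌈c j⌉)
  have hS : ∑ j, (c j + (1 - ⌈c j⌉)) = S := by simp [S, Finset.sum_add_distrib, hs]
  have hSN : S ≤ N := by
    have hlt : (S : K) < Fintype.card ι := hS.symm.trans_lt (sum_add_one_sub_ceil_lt_card hi)
    have hcard : S < Fintype.card ι := mod_cast hlt
    lia
  set e : ι → ℤ := Pi.single i (N - S)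
  have he : 0 ≤ e := Pi.single_nonneg.2 (sub_nonneg.2 hSN)
  have hshift (j : ι) : c j + ((1 - ⌈c j⌉ + e j : ℤ) : K) = c j + (1 - ⌈c j⌉) + e j := by
    push_cast
    ring
  refine ⟨fun j ↦ 1 - ⌈c j⌉ + e j, fun j ↦ ?_, ?_⟩
  · have hej : (0 : K) ≤ e j := mod_cast he j
    rw [hshift]
    linarith [Int.ceil_lt_add_one (c j)]
  · simp only [hshift]
    rw [Finset.sum_add_distrib, hS, ← Int.cast_sum, Fintype.sum_pi_single']
    push_cast
    ring

lemma exists_pos_forall_sub_mul_pos [Finite ι] [Field K] [IsStrictOrderedRing K]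
    [TopologicalSpace K] [OrderTopology K] {p μ : ι → K}
    (h : ∀ i, 0 < p i ∨ p i = 0 ∧ μ i < 0) : ∃ ε > 0, ∀ i, 0 < p i - ε * μ i := by
  suffices ∀ᶠ ε in 𝓝[>] (0 : K), ∀ i, 0 < p i - ε * μ i from
    (eventually_mem_nhdsWithin.and this).exists
  refine Filter.eventually_all.2 fun i ↦ ?_
  rcases h i with hp | ⟨hp, hμ⟩
  · have hcont : Continuous fun ε : K ↦ p i - ε * μ i := by fun_prop
    exact nhdsWithin_le_nhds (hcont.continuousAt.eventually_const_lt (by simpa using hp))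
  · filter_upwards [self_mem_nhdsWithin] with ε (hε : 0 < ε)
    simpa [hp] using mul_neg_of_pos_of_neg hε hμ

end PositiveWeights

section Simplex

variable {ι E : Type*} [NormedAddCommGroup E] [NormedSpace ℝ E]
  (b : AffineBasis ι ℝ E) {P : Set E}

lemma sum_smul_mem_interior_smul [Fintype ι] (hP : Convex ℝ P) (hb : ∀ i, b i ∈ P) {m : ι → ℝ}
    (hm : ∀ i, 0 < m i) : ∑ i, m i • b i ∈ interior ((∑ i, m i) • P) := by
  have := b.nonempty
  set s := ∑ i, m i
  have hs : 0 < s := Finset.sum_pos (fun i _ ↦ hm i) Finset.univ_nonempty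
  have hw : ∑ i, s⁻¹ * m i = 1 := by rw [← Finset.mul_sum, inv_mul_cancel₀ hs.ne']
  have hsub : convexHull ℝ (Set.range b) ⊆ P := convexHull_min (Set.range_subset_iff.2 hb) hP
  rw [interior_smul₀ hs.ne']
  refine ⟨∑ i, (s⁻¹ * m i) • b i, interior_mono hsub ?_, ?_⟩
  · rw [b.interior_convexHull]
    intro i
    rw [coord_sum_smul b hw]
    exact mul_pos (inv_pos.2 hs) (hm i)
  · simp only [Finset.smul_sum, smul_smul, mul_inv_cancel_left₀ hs.ne']

lemma smul_add_sum_smul_mem_interior_smul [Fintype ι] (hP : Convex ℝ P) (hb : ∀ i, b i ∈ P)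
    {u : E} (hu : u ∈ P) {a : ℝ} (ha : 0 ≤ a) {m : ι → ℝ} (hm : ∀ i, 0 < m i) :
    a • u + ∑ i, m i • b i ∈ interior ((a + ∑ i, m i) • P) := by
  rw [hP.add_smul ha (Finset.sum_nonneg fun i _ ↦ (hm i).le)]
  exact subset_interior_add_right
    (Set.add_mem_add (Set.smul_mem_smul_set hu) (sum_smul_mem_interior_smul b hP hb hm))

variable {b} [Finite ι] {L : AddSubgroup E}

lemma coord_mem_range_intCast_of_disjoint_interior (hP : Convex ℝ P) (hb : ∀ i, b i ∈ P)
    (hbL : ∀ i, b i ∈ L)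
    (hPL : Disjoint (interior ((Module.finrank ℝ E : ℝ) • P)) (L : Set E)) {x : E} (hx : x ∈ L)
    (i : ι) : b.coord i x ∈ Set.range ((↑) : ℤ → ℝ) := by
  cases nonempty_fintype ι
  by_contra hi
  have hcoord : ∑ j, b.coord j x = (1 : ℤ) := mod_cast b.sum_coord_apply_eq_one x
  have hcard : Fintype.card ι ≤ (Module.finrank ℝ E : ℤ) + 1 :=
    mod_cast b.card_eq_finrank_add_one.le
  obtain ⟨d, hd_pos, hd_sum⟩ := exists_int_add_pos_sum_eq hcoord hcard hi
  have hshift : ∑ j, (b.coord j x + d j) • b j = x + ∑ j, d j • b j := by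
    simp only [add_smul, Finset.sum_add_distrib, b.linear_combination_coord_eq_self,
      Int.cast_smul_eq_zsmul]
  have hmem := sum_smul_mem_interior_smul b hP hb hd_pos
  rw [hd_sum, hshift, Int.cast_natCast] at hmem
  exact Set.disjoint_left.1 hPL hmem
    (L.add_mem hx (L.sum_mem fun j _ ↦ L.zsmul_mem (hbL j) (d j)))

lemma coord_nonneg_of_disjoint_interior (hP : Convex ℝ P) (hb : ∀ i, b i ∈ P) (hbL : ∀ i, b i ∈ L)
    (hPL : Disjoint (interior ((Module.finrank ℝ E : ℝ) • P)) (L : Set E)) {u : E} (hu : u ∈ P)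
    (j : ι) : 0 ≤ b.coord j u := by
  classical
  cases nonempty_fintype ι
  by_contra! hneg
  set p : ι → ℝ := fun i ↦ if i = j then 0 else 1
  have hp_sum : ∑ i, p i = Module.finrank ℝ E := by
    simp [p, Finset.sum_ite, Finset.filter_ne', b.card_eq_finrank_add_one]
  have hp_mem : ∑ i, p i • b i ∈ L := by
    refine L.sum_mem fun i _ ↦ ?_
    by_cases hij : i = j <;> simp [p, hij, hbL i, L.zero_mem]
  obtain ⟨ε, hε, hm⟩ : ∃ ε > 0, ∀ i, 0 < p i - ε * b.coord i u := by
    refine exists_pos_forall_sub_mul_pos fun i ↦ ?_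
    by_cases hij : i = j <;> simp [p, hij, hneg]
  have hsum : ε + ∑ i, (p i - ε * b.coord i u) = Module.finrank ℝ E := by
    rw [Finset.sum_sub_distrib, ← Finset.mul_sum, b.sum_coord_apply_eq_one, hp_sum]
    ring
  have hpoint : ε • u + ∑ i, (p i - ε * b.coord i u) • b i = ∑ i, p i • b i := by
    simp only [sub_smul, mul_smul, Finset.sum_sub_distrib, ← Finset.smul_sum,
      b.linear_combination_coord_eq_self]
    abel
  have hmem := smul_add_sum_smul_mem_interior_smul b hP hb hu hε.le hm
  rw [hsum, hpoint] at hmem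
  exact Set.disjoint_left.1 hPL hmem hp_mem

lemma eq_convexHull_range_of_disjoint_interior (hP : Convex ℝ P) (hb : ∀ i, b i ∈ P)
    (hbL : ∀ i, b i ∈ L)
    (hPL : Disjoint (interior ((Module.finrank ℝ E : ℝ) • P)) (L : Set E)) :
    P = convexHull ℝ (Set.range b) := by
  refine Set.Subset.antisymm (fun u hu ↦ ?_) (convexHull_min (Set.range_subset_iff.2 hb) hP)
  rw [b.convexHull_eq_nonneg_coord]
  exact coord_nonneg_of_disjoint_interior hP hb hbL hPL hu

end Simplex

section IntegerLattice

variable {n : ℕ}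

/-- The lattice `ℤ^n` as an additive subgroup of `ℝ^n`. -/
def integerLattice (n : ℕ) : AddSubgroup (Fin n → ℝ) where
  carrier := {x | IsLatticePt x}
  zero_mem' _ := ⟨0, by simp⟩
  add_mem' hx hy i := by
    obtain ⟨⟨a, ha⟩, c, hc⟩ := hx i, hy i
    exact ⟨a + c, by simp [ha, hc]⟩
  neg_mem' hx i := by
    obtain ⟨a, ha⟩ := hx i
    exact ⟨-a, by simp [ha]⟩

lemma mem_integerLattice_iff {x : Fin n → ℝ} :
    x ∈ integerLattice n ↔ ∃ z : Fin n → ℤ, x = fun i ↦ (z i : ℝ) := by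
  change (∀ i, ∃ z : ℤ, x i = z) ↔ _
  simp only [Classical.skolem, funext_iff]

lemma single_one_mem_integerLattice (j : Fin n) : Pi.single j 1 ∈ integerLattice n := fun i ↦
  ⟨(Pi.single j 1 : Fin n → ℤ) i, by by_cases h : i = j <;> simp [h]⟩

end IntegerLattice

section Chart

variable {n : ℕ} {E : Type*} [AddCommGroup E] [Module ℝ E] (b : AffineBasis (Fin (n + 1)) ℝ E)

/-- The affine chart of `E` given by the barycentric coordinates of positive index. It carries the
simplex spanned by `b` onto the standard simplex, the vertex `b 0` going to the origin. -/
def simplexChart : E →ᵃ[ℝ] (Fin n → ℝ) := AffineMap.pi fun i ↦ b.coord i.succ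

lemma simplexChart_apply (x : E) (i : Fin n) : simplexChart b x i = b.coord i.succ x := rfl

lemma simplexChart_vertex (k : Fin (n + 1)) : simplexChart b (b k) = stdSimplexVert n k := by
  ext i
  simp only [simplexChart_apply, b.coord_apply, stdSimplexVert, Fin.ext_iff, Fin.val_succ, eq_comm]

lemma image_simplexChart_convexHull :
    simplexChart b '' convexHull ℝ (Set.range b) = unimodSimplex n := by
  rw [AffineMap.image_convexHull, ← Set.range_comp, unimodSimplex]
  exact congrArg (fun v ↦ convexHull ℝ (Set.range v)) (funext (simplexChart_vertex b))

variable {b} {L : AddSubgroup E}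

lemma mapsTo_simplexChart (hL : ∀ x ∈ L, ∀ i, b.coord i x ∈ Set.range ((↑) : ℤ → ℝ)) :
    Set.MapsTo (simplexChart b) L (integerLattice n) := fun x hx i ↦ by
  obtain ⟨z, hz⟩ := hL x hx i.succ
  exact ⟨z, hz.symm⟩

lemma surjOn_simplexChart (hbL : ∀ i, b i ∈ L) :
    Set.SurjOn (simplexChart b) L (integerLattice n) := by
  intro y hy
  choose z hz using hy
  set a : Fin (n + 1) → ℤ := Fin.cons (1 - ∑ i, z i) z
  have ha : ∑ k, (a k : ℝ) = 1 := by simp [a, Fin.sum_univ_succ]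
  refine ⟨∑ k, a k • b k, L.sum_mem fun k _ ↦ L.zsmul_mem (hbL k) (a k), ?_⟩
  ext i
  simp only [← Int.cast_smul_eq_zsmul ℝ]
  rw [simplexChart_apply, coord_sum_smul b ha, hz]
  rfl

end Chart

section Unimodular

variable {n : ℕ}

lemma unimodMap_intCast (U : Matrix (Fin n) (Fin n) ℤ) (w z : Fin n → ℤ) :
    unimodMap U w (fun j ↦ (z j : ℝ)) = fun i ↦ ((U.mulVec z + w) i : ℝ) := by
  ext i
  simp [unimodMap, Matrix.mulVec, dotProduct]

lemma exists_unimodMap_eq_of_mapsTo {f : (Fin n → ℝ) →ᵃ[ℝ] (Fin n → ℝ)}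
    (hf : Set.MapsTo f (integerLattice n) (integerLattice n)) :
    ∃ (U : Matrix (Fin n) (Fin n) ℤ) (w : Fin n → ℤ), unimodMap U w = f := by
  have hlin (j : Fin n) : f.linear (Pi.single j 1) ∈ integerLattice n := by
    rw [f.decomp', Pi.sub_apply]
    exact sub_mem (hf (single_one_mem_integerLattice j)) (hf (zero_mem (integerLattice n)))
  choose a ha using hlin
  choose w hw using hf (zero_mem (integerLattice n))
  refine ⟨Matrix.of fun i j ↦ a j i, w, ?_⟩
  ext x i
  calc
    unimodMap (Matrix.of fun i j ↦ a j i) w x i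
      = ∑ j, x j * f.linear (Pi.single j 1) i + f 0 i := by simp [unimodMap, ha, hw, mul_comm]
    _ = (f.linear (∑ j, x j • Pi.single j 1) + f 0) i := by simp [map_sum]
    _ = f x i := by
      rw [← pi_eq_sum_univ' x]
      exact (congrFun (congrFun f.decomp x) i).symm

lemma isUnit_det_of_surjOn_unimodMap {U : Matrix (Fin n) (Fin n) ℤ} {w : Fin n → ℤ}
    (h : Set.SurjOn (unimodMap U w) (integerLattice n) (integerLattice n)) : IsUnit U.det := by
  rw [← Matrix.isUnit_iff_isUnit_det, ← Matrix.mulVec_surjective_iff_isUnit]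
  intro z
  obtain ⟨x, hx, hxz⟩ := h (mem_integerLattice_iff.2 ⟨z + w, rfl⟩)
  obtain ⟨y, rfl⟩ := mem_integerLattice_iff.1 hx
  refine ⟨y, funext fun i ↦ ?_⟩
  have hi := congrFun hxz i
  rw [unimodMap_intCast] at hi
  simpa using hi

end Unimodular

theorem stmt2_general {n : ℕ} (P : Set (Fin n → ℝ)) (hP : Convex ℝ P)
    (hspan : affineSpan ℝ {x ∈ P | IsLatticePt x} = ⊤) (h : ¬ HasInteriorLatticePt P n) :
    ∃ (U : Matrix (Fin n) (Fin n) ℤ) (w : Fin n → ℤ), IsUnit U.det ∧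
      (fun x i => (∑ j, (U i j : ℝ) * x j) + (w i : ℝ)) '' P = unimodSimplex n := by
  obtain ⟨b, hb⟩ := exists_affineBasis_forall_mem (Module.finrank_fin_fun ℝ) hspan
  have hbP (i) : b i ∈ P := (hb i).1
  have hbL (i) : b i ∈ integerLattice n := (hb i).2
  have hPL : Disjoint (interior ((Module.finrank ℝ (Fin n → ℝ) : ℝ) • P)) (integerLattice n) := by
    rw [Module.finrank_fin_fun]
    exact Set.disjoint_left.2 fun x hx hxL ↦ h ⟨x, hx, hxL⟩
  obtain ⟨U, w, hUw⟩ := exists_unimodMap_eq_of_mapsTo (mapsTo_simplexChart fun x hx ↦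
    coord_mem_range_intCast_of_disjoint_interior hP hbP hbL hPL hx)
  refine ⟨U, w, isUnit_det_of_surjOn_unimodMap (hUw ▸ surjOn_simplexChart hbL), ?_⟩
  change unimodMap U w '' P = _
  rw [hUw, eq_convexHull_range_of_disjoint_interior hP hbP hbL hPL, image_simplexChart_convexHull]

/-- A full-dimensional lattice polytope `P ⊆ ℝ^n` such that the interior of
`n • P` contains no lattice point (i.e. `cd(P) = n + 1`) is unimodularly equivalent to the
standard unimodular simplex `Δ_n`. -/
theorem stmt2 {n : ℕ} (P : Set (Fin n → ℝ)) (hP : IsLatticePolytope P)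
    (hfull : affineSpan ℝ P = ⊤) (h : ¬ HasInteriorLatticePt P n) :
    ∃ (U : Matrix (Fin n) (Fin n) ℤ) (w : Fin n → ℤ), IsUnit U.det ∧
      (fun x i => (∑ j, (U i j : ℝ) * x j) + (w i : ℝ)) '' P = unimodSimplex n := by
  obtain ⟨V, hV, rfl⟩ := hP
  rw [affineSpan_convexHull] at hfull
  exact stmt2_general _ (convex_convexHull ℝ _) (top_unique (hfull.ge.trans
    (affineSpan_mono ℝ fun v hv ↦ ⟨subset_convexHull ℝ _ hv, hV v hv⟩))) h
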